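/- Let (t, n, b) be a smooth right-handed orthonormal frame on an open set U ⊆ ℝ³ with Ω_b = 0 identically on U (so b itself is a Poisson vector), let α be smooth and nowhere zero and μ smooth, and set J = α(n + μb). Then the compatibility condition J·(curl b) + b·(curl J) = 0 holds at a point of U if and only if ∂_s α + α Ω_nb = 0 holds there. -/

import Mathlib

/-!
The expression `J₁ · curl J₂ + J₂ · curl J₁` is additive in `J₁`, and the product rule
`curl (f w) = f curl w + ∇f × w` makes it homogeneous over functions up to the triple product
`J₂ · (∇f × w)`. For `J₁ = α (n + μ b)` and `J₂ = b` the multiples of `b` have vanishing triple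
products and contribute only `2 α μ Ω_b`, so the one surviving derivative is in `b · (∇α × n)`.
Since `n × b = n × (t × n) = t`, this term is `t · ∇α`.
-/

noncomputable section

/-- Three-dimensional Euclidean space. -/
abbrev E3 : Type := EuclideanSpace ℝ (Fin 3)

/-- The Euclidean dot product on ℝ³. -/
def dot (u v : E3) : ℝ := ∑ i, u i * v i

/-- The cross product on ℝ³. -/
def cross (u v : E3) : E3 :=
  (WithLp.equiv 2 (Fin 3 → ℝ)).symm
    ![u 1 * v 2 - u 2 * v 1, u 2 * v 0 - u 0 * v 2, u 0 * v 1 - u 1 * v 0]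

/-- Partial derivative of a scalar function in the `i`-th coordinate direction. -/
def pd (i : Fin 3) (f : E3 → ℝ) (x : E3) : ℝ :=
  fderiv ℝ f x (EuclideanSpace.single i 1)

/-- The gradient ∇f of a scalar function. -/
def grad (f : E3 → ℝ) (x : E3) : E3 :=
  (WithLp.equiv 2 (Fin 3 → ℝ)).symm ![pd 0 f x, pd 1 f x, pd 2 f x]

/-- The curl ∇×F of a vector field. -/
def curl (F : E3 → E3) (x : E3) : E3 :=
  (WithLp.equiv 2 (Fin 3 → ℝ)).symm
    ![pd 1 (fun y => F y 2) x - pd 2 (fun y => F y 1) x,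
      pd 2 (fun y => F y 0) x - pd 0 (fun y => F y 2) x,
      pd 0 (fun y => F y 1) x - pd 1 (fun y => F y 0) x]

/-- Directional derivative ∂ₛ f = t·∇f of a scalar function along a vector field t. -/
def ds (t : E3 → E3) (f : E3 → ℝ) (x : E3) : ℝ := dot (t x) (grad f x)

/-- Componentwise directional derivative (u·∇)w of a vector field w along u. -/
def dirDeriv (u w : E3 → E3) (x : E3) : E3 :=
  (WithLp.equiv 2 (Fin 3 → ℝ)).symm
    ![fderiv ℝ (fun y => w y 0) x (u x),
      fderiv ℝ (fun y => w y 1) x (u x),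
      fderiv ℝ (fun y => w y 2) x (u x)]

/-- Helicity density w·(curl w) of a vector field. -/
def hel (w : E3 → E3) (x : E3) : ℝ := dot (w x) (curl w x)

/-- Cross-helicity sum n·(curl b) + b·(curl n). -/
def crossHel (n b : E3 → E3) (x : E3) : ℝ :=
  dot (n x) (curl b x) + dot (b x) (curl n x)

/-- A smooth right-handed orthonormal (Serret–Frenet type) frame on U. -/
def IsFrameOn (t n b : E3 → E3) (U : Set E3) : Prop :=
  ContDiffOn ℝ (⊤ : ℕ∞) t U ∧ ContDiffOn ℝ (⊤ : ℕ∞) n U ∧ ContDiffOn ℝ (⊤ : ℕ∞) b U ∧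
  ∀ x ∈ U, ‖t x‖ = 1 ∧ ‖n x‖ = 1 ∧ ‖b x‖ = 1 ∧
    dot (t x) (n x) = 0 ∧ dot (t x) (b x) = 0 ∧ dot (n x) (b x) = 0 ∧
    b x = cross (t x) (n x)

section VectorAlgebra

lemma dot_eq_dotProduct (u v : E3) : dot u v = u.ofLp ⬝ᵥ v.ofLp := rfl

lemma ofLp_cross (u v : E3) : (cross u v).ofLp = crossProduct u.ofLp v.ofLp :=
  (cross_apply u.ofLp v.ofLp).symm

lemma dot_self_eq_norm_sq (v : E3) : dot v v = ‖v‖ ^ 2 := by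
  rw [EuclideanSpace.real_norm_sq_eq]
  simp only [dot, sq]

lemma dot_add_left (u v w : E3) : dot (u + v) w = dot u w + dot v w :=
  add_dotProduct u.ofLp v.ofLp w.ofLp

lemma dot_add_right (u v w : E3) : dot u (v + w) = dot u v + dot u w :=
  dotProduct_add u.ofLp v.ofLp w.ofLp

lemma dot_smul_left (c : ℝ) (u v : E3) : dot (c • u) v = c * dot u v :=
  smul_dotProduct c u.ofLp v.ofLp

lemma dot_smul_right (c : ℝ) (u v : E3) : dot u (c • v) = c * dot u v :=
  dotProduct_smul c u.ofLp v.ofLp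

lemma dot_cross_right_self (g v : E3) : dot v (cross g v) = 0 := by
  rw [dot_eq_dotProduct, ofLp_cross, dot_cross_self]

lemma dot_cross_add_smul_self (g v w : E3) (c : ℝ) :
    dot v (cross g (w + c • v)) = dot v (cross g w) := by
  simp only [dot_eq_dotProduct, ofLp_cross, WithLp.ofLp_add, WithLp.ofLp_smul, map_add, map_smul,
    dotProduct_add, dotProduct_smul, dot_cross_self, smul_zero, add_zero]

lemma dot_cross_cross (u v w z : E3) :
    dot (cross u v) (cross w z) = dot u w * dot v z - dot u z * dot v w := by
  simp only [dot_eq_dotProduct, ofLp_cross, cross_dot_cross]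

lemma dot_cross_cross_of_norm_eq_one {t n : E3} (hn : ‖n‖ = 1) (htn : dot t n = 0) (g : E3) :
    dot (cross t n) (cross g n) = dot t g := by
  rw [dot_cross_cross, dot_self_eq_norm_sq, hn, htn, one_pow, mul_one, zero_mul, sub_zero]

end VectorAlgebra

section Curl

variable {x : E3}

lemma pd_add {f g : E3 → ℝ} (hf : DifferentiableAt ℝ f x) (hg : DifferentiableAt ℝ g x)
    (i : Fin 3) : pd i (fun y => f y + g y) x = pd i f x + pd i g x := by
  simp only [pd, fderiv_fun_add hf hg, add_apply]

lemma pd_mul {f g : E3 → ℝ} (hf : DifferentiableAt ℝ f x) (hg : DifferentiableAt ℝ g x)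
    (i : Fin 3) : pd i (fun y => f y * g y) x = f x * pd i g x + pd i f x * g x := by
  simp only [pd, fderiv_fun_mul hf hg, add_apply, smul_apply, smul_eq_mul, mul_comm]

lemma curl_add {u w : E3 → E3} (hu : DifferentiableAt ℝ u x) (hw : DifferentiableAt ℝ w x) :
    curl (u + w) x = curl u x + curl w x := by
  have hpd (i j : Fin 3) :
      pd i (fun y => u y j + w y j) x = pd i (fun y => u y j) x + pd i (fun y => w y j) x :=
    pd_add (differentiableAt_euclidean.1 hu j) (differentiableAt_euclidean.1 hw j) i
  ext k
  fin_cases k <;> simp [curl, hpd, add_sub_add_comm]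

lemma curl_smul {f : E3 → ℝ} {w : E3 → E3} (hf : DifferentiableAt ℝ f x)
    (hw : DifferentiableAt ℝ w x) :
    curl (f • w) x = f x • curl w x + cross (grad f x) (w x) := by
  have hpd (i j : Fin 3) :
      pd i (fun y => f y * w y j) x = f x * pd i (fun y => w y j) x + pd i f x * w x j :=
    pd_mul hf (differentiableAt_euclidean.1 hw j) i
  ext k
  fin_cases k <;> simp [curl, cross, grad, hpd, mul_sub, add_sub_add_comm]

end Curl

section CrossHelicity

variable {u v w : E3 → E3} {f : E3 → ℝ} {x : E3}

lemma crossHel_self (w : E3 → E3) (x : E3) : crossHel w w x = 2 * hel w x :=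
  (two_mul _).symm

lemma crossHel_add_left (v : E3 → E3) (hu : DifferentiableAt ℝ u x)
    (hw : DifferentiableAt ℝ w x) :
    crossHel (u + w) v x = crossHel u v x + crossHel w v x := by
  simp only [crossHel, curl_add hu hw, Pi.add_apply, dot_add_left, dot_add_right]
  ring

lemma crossHel_smul_left (v : E3 → E3) (hf : DifferentiableAt ℝ f x)
    (hw : DifferentiableAt ℝ w x) :
    crossHel (f • w) v x = f x * crossHel w v x + dot (v x) (cross (grad f x) (w x)) := by
  simp only [crossHel, curl_smul hf hw, Pi.smul_apply', dot_smul_left, dot_add_right,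
    dot_smul_right]
  ring

lemma crossHel_smul_self (hf : DifferentiableAt ℝ f x) (hw : DifferentiableAt ℝ w x) :
    crossHel (f • w) w x = 2 * f x * hel w x := by
  rw [crossHel_smul_left w hf hw, crossHel_self, dot_cross_right_self]
  ring

lemma crossHel_smul_add_smul_self {α μ : E3 → ℝ} (hα : DifferentiableAt ℝ α x)
    (hμ : DifferentiableAt ℝ μ x) (hv : DifferentiableAt ℝ v x) (hw : DifferentiableAt ℝ w x) :
    crossHel (α • (v + μ • w)) w x =
      dot (w x) (cross (grad α x) (v x)) + α x * (crossHel v w x + 2 * μ x * hel w x) := by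
  have hμw : DifferentiableAt ℝ (μ • w) x := hμ.smul hw
  calc crossHel (α • (v + μ • w)) w x
    _ = α x * crossHel (v + μ • w) w x + dot (w x) (cross (grad α x) (v x + μ x • w x)) :=
      crossHel_smul_left w hα (hv.add hμw)
    _ = α x * (crossHel v w x + 2 * μ x * hel w x) + dot (w x) (cross (grad α x) (v x)) := by
      rw [crossHel_add_left w hv hμw, crossHel_smul_self hμ hw, dot_cross_add_smul_self]
    _ = dot (w x) (cross (grad α x) (v x)) + α x * (crossHel v w x + 2 * μ x * hel w x) :=
      add_comm _ _

end CrossHelicity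

theorem compatibility_with_binormal_iff_general {t n b : E3 → E3} {α μ : E3 → ℝ} {x : E3}
    (hn : DifferentiableAt ℝ n x) (hb : DifferentiableAt ℝ b x)
    (hα : DifferentiableAt ℝ α x) (hμ : DifferentiableAt ℝ μ x)
    (hn_norm : ‖n x‖ = 1) (htn : dot (t x) (n x) = 0) (hb_cross : b x = cross (t x) (n x)) :
    crossHel (α • (n + μ • b)) b x = 0 ↔
      ds t α x + α x * (crossHel n b x + 2 * μ x * hel b x) = 0 := by
  have htriple : dot (b x) (cross (grad α x) (n x)) = ds t α x := by
    rw [hb_cross, dot_cross_cross_of_norm_eq_one hn_norm htn, ds]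
  rw [crossHel_smul_add_smul_self hα hμ hn hb, htriple]

/-- with Ωᵦ = 0 on U, the compatibility of J = α(n + μb) and b
holds at a point iff ∂ₛα + α Ωₙᵦ = 0 there. -/
theorem compatibility_with_binormal_iff
    (U : Set E3) (hU : IsOpen U) (t n b : E3 → E3)
    (hframe : IsFrameOn t n b U)
    (hΩb : ∀ x ∈ U, hel b x = 0)
    (α μ : E3 → ℝ)
    (hα : ContDiffOn ℝ (⊤ : ℕ∞) α U) (hμ : ContDiffOn ℝ (⊤ : ℕ∞) μ U)
    (hα0 : ∀ x ∈ U, α x ≠ 0) :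
    ∀ x ∈ U,
      (dot (α x • (n x + μ x • b x)) (curl b x)
          + dot (b x) (curl (fun y => α y • (n y + μ y • b y)) x) = 0)
        ↔ (ds t α x + α x * crossHel n b x = 0) := by
  intro x hx
  obtain ⟨-, hn, hb, horthonormal⟩ := hframe
  obtain ⟨-, hn_norm, -, htn, -, -, hb_cross⟩ := horthonormal x hx
  have differentiableAt_x {F : Type} [NormedAddCommGroup F] [NormedSpace ℝ F] {f : E3 → F}
      (hf : ContDiffOn ℝ (⊤ : ℕ∞) f U) : DifferentiableAt ℝ f x :=
    (hf.contDiffAt (hU.mem_nhds hx)).differentiableAt (by simp)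
  have h := compatibility_with_binormal_iff_general (differentiableAt_x hn) (differentiableAt_x hb)
    (differentiableAt_x hα) (differentiableAt_x hμ) hn_norm htn hb_cross
  rwa [hΩb x hx, mul_zero, add_zero] at h
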